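/- arXiv:1601.05682 — 2 statements merged into one kernel-verified Lean document; each statement's English description precedes it below -/
import Mathlib

section
/- Assume moreover β = 2d + 1. Then as m → ∞ one has r_m = ρ(d) + O(m^{−2d−1}·log m + m^{−2}). -/
/-!
Near `0` the weight `f(x) / sin⁴(x/2)` is `16 c₀ x^{-2d-2} + O(x^{-2d}) + O(x^{-1})`, because
`sin⁻⁴(x/2) = 16 x⁻⁴ + O(x⁻²)` and, for `β = 2d + 1`, the second term of `f` is `c₁ x³`; by
compactness this holds on all of `(0, π]` (`exists_abs_div_sub_le`).

Write `J_k(q) = ∫₀^∞ x^{-q} sin^k x dx` (`sinMoment`) and let `I_k` be the integral of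
`f(x) sin^k(mx/2) / sin⁴(x/2)` over `(0, π)`. Rescaling by `m/2` and integrating the pointwise estimate
gives `I_k = 16 c₀ (m/2)^{2d+1} J_k(2d+2) + O(m^{2d-1} + log m)` (`exists_abs_integral_sub_le`): the
`x^{-2d}` error contributes `m^{2d-1}`, the `x^{-1}` error contributes `log m`, and extending the
main integral to infinity costs `O(1)`. Hence `I₆ / I₄` tends to `J₆ / J₄` with relative error
`m^{-2} + m^{-2d-1} log m` (`abs_div_sub_div_le`).

It remains to see that `ρ(d) = 1 - 2 J₆ / J₄` (`rho_eq`). With `h(x) = cos x - 1 + x²/2`,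
`8 sin⁴ x = h(4x) - 4 h(2x)` and `32 sin⁶ x = 6 h(4x) - 15 h(2x) - h(6x)`, so by scaling both
moments are explicit multiples of `∫₀^∞ x^{-2d-2} h(x) dx`, which cancels in the quotient.
-/

open MeasureTheory Filter Asymptotics

/-- `r_m := 1 - 2 (∫₀^π f(x) sin⁶(mx/2)/sin⁴(x/2) dx)/(∫₀^π f(x) sin⁴(mx/2)/sin⁴(x/2) dx)`. -/
noncomputable def rIR (f : ℝ → ℝ) (m : ℕ) : ℝ :=
  1 - 2 * (∫ x in (0 : ℝ)..Real.pi, f x * Real.sin (m * x / 2) ^ 6 / Real.sin (x / 2) ^ 4) /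
      (∫ x in (0 : ℝ)..Real.pi, f x * Real.sin (m * x / 2) ^ 4 / Real.sin (x / 2) ^ 4)

/-- `ρ(d) := (4^{d+1.5} - 9^{d+0.5} - 7)/(2(4 - 4^{d+0.5}))`. -/
noncomputable def rho (d : ℝ) : ℝ :=
  ((4 : ℝ) ^ (d + 1.5) - 9 ^ (d + 0.5) - 7) / (2 * (4 - 4 ^ (d + 0.5)))

section ExpansionLemmas

open Set

/-! ### Moments of powers of the sine, and the value of `ρ(d)` -/

/-- Convergence of `∫₀^∞ x^{-q} g(x) dx` when `g = O(x^a)` near `0`, `g = O(x^b)` near infinity and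
`b + 1 < q < a + 1`. -/
lemma integrableOn_rpow_mul {g : ℝ → ℝ} (hg : Continuous g) {a b q C D : ℝ}
    (h0 : ∀ x, 0 < x → x ≤ 1 → |g x| ≤ C * x ^ a) (h1 : ∀ x, 1 < x → |g x| ≤ D * x ^ b)
    (ha : q < a + 1) (hb : b + 1 < q) :
    IntegrableOn (fun x : ℝ => x ^ (-q) * g x) (Ioi 0) := by
  have hmeas : ∀ s : Set ℝ, AEStronglyMeasurable (fun x : ℝ => x ^ (-q) * g x)
      (volume.restrict s) := fun s =>
    ((measurable_id.pow_const (-q)).mul hg.measurable).aestronglyMeasurable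
  rw [← Ioc_union_Ioi_eq_Ioi (zero_le_one' ℝ)]
  refine IntegrableOn.union ?_ ?_
  · have hi : IntegrableOn (fun x : ℝ => C * x ^ (a - q)) (Ioc 0 1) :=
      ((intervalIntegral.intervalIntegrable_rpow' (a := 0) (b := 1)
        (by linarith : -1 < a - q)).1).const_mul C
    refine Integrable.mono' hi (hmeas _) ?_
    filter_upwards [ae_restrict_mem measurableSet_Ioc] with x hx
    have hx0 : 0 < x := hx.1
    rw [norm_mul, Real.norm_eq_abs, Real.norm_eq_abs, abs_of_pos (Real.rpow_pos_of_pos hx0 _)]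
    calc x ^ (-q) * |g x| ≤ x ^ (-q) * (C * x ^ a) := by
          gcongr; exact h0 x hx0 hx.2
      _ = C * x ^ (a - q) := by
          rw [sub_eq_add_neg, Real.rpow_add hx0]; ring
  · have hi : IntegrableOn (fun x : ℝ => D * x ^ (b - q)) (Ioi 1) :=
      (integrableOn_Ioi_rpow_of_lt (by linarith : b - q < -1) one_pos).const_mul D
    refine Integrable.mono' hi (hmeas _) ?_
    filter_upwards [ae_restrict_mem measurableSet_Ioi] with x hx
    have hx0 : 0 < x := one_pos.trans hx
    rw [norm_mul, Real.norm_eq_abs, Real.norm_eq_abs, abs_of_pos (Real.rpow_pos_of_pos hx0 _)]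
    calc x ^ (-q) * |g x| ≤ x ^ (-q) * (D * x ^ b) := by
          gcongr; exact h1 x hx
      _ = D * x ^ (b - q) := by
          rw [sub_eq_add_neg, Real.rpow_add hx0]; ring

lemma rpow_mul_comp_mul (g : ℝ → ℝ) (q : ℝ) {c x : ℝ} (hc : 0 < c) (hx : 0 < x) :
    x ^ (-q) * g (c * x) = c ^ q * ((c * x) ^ (-q) * g (c * x)) := by
  rw [Real.mul_rpow hc.le hx.le, Real.rpow_neg hc.le]
  have := (Real.rpow_pos_of_pos hc q).ne'
  field_simp

lemma integrableOn_rpow_comp_mul {g : ℝ → ℝ} {q c : ℝ} (hc : 0 < c)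
    (h : IntegrableOn (fun x : ℝ => x ^ (-q) * g x) (Ioi 0)) :
    IntegrableOn (fun x : ℝ => x ^ (-q) * g (c * x)) (Ioi 0) := by
  have := (integrableOn_Ioi_comp_mul_left_iff (fun x : ℝ => x ^ (-q) * g x) 0 hc).2
    (by simpa using h)
  refine IntegrableOn.congr_fun (this.const_mul (c ^ q)) (fun x hx => ?_) measurableSet_Ioi
  exact (rpow_mul_comp_mul g q hc hx).symm

lemma integral_rpow_comp_mul (g : ℝ → ℝ) (q : ℝ) {c : ℝ} (hc : 0 < c) :
    ∫ x in Ioi (0 : ℝ), x ^ (-q) * g (c * x)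
      = c ^ (q - 1) * ∫ x in Ioi (0 : ℝ), x ^ (-q) * g x := by
  rw [setIntegral_congr_fun measurableSet_Ioi
    (fun x hx => rpow_mul_comp_mul g q hc hx), integral_const_mul,
    integral_comp_mul_left_Ioi (fun x : ℝ => x ^ (-q) * g x) 0 hc, mul_zero, smul_eq_mul,
    ← mul_assoc, Real.rpow_sub hc, Real.rpow_one, div_eq_mul_inv]

lemma integrableOn_rpow_mul_sin_pow {q : ℝ} {k : ℕ} (hk : 4 ≤ k) (hq : 1 < q) (hq' : q < 5) :
    IntegrableOn (fun x : ℝ => x ^ (-q) * Real.sin x ^ k) (Ioi 0) := by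
  refine integrableOn_rpow_mul (by fun_prop) (a := 4) (b := 0) (C := 1) (D := 1)
    (fun x hx0 hx1 => ?_) (fun x hx => ?_) (by linarith) (by linarith)
  · rw [abs_pow, one_mul]
    calc |Real.sin x| ^ k ≤ |Real.sin x| ^ 4 :=
          pow_le_pow_of_le_one (abs_nonneg _) (Real.abs_sin_le_one x) hk
      _ ≤ |x| ^ 4 := pow_le_pow_left₀ (abs_nonneg _) Real.abs_sin_le_abs 4
      _ = x ^ (4 : ℝ) := by rw [abs_of_pos hx0]; exact_mod_cast (Real.rpow_natCast x 4).symm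
  · rw [abs_pow, Real.rpow_zero, one_mul]
    exact pow_le_one₀ (abs_nonneg _) (Real.abs_sin_le_one x)

lemma integrableOn_rpow_mul_cos_sub {q : ℝ} (hq : 3 < q) (hq' : q < 5) :
    IntegrableOn (fun x : ℝ => x ^ (-q) * (Real.cos x - 1 + x ^ 2 / 2)) (Ioi 0) := by
  refine integrableOn_rpow_mul (by fun_prop) (a := 4) (b := 2) (C := 1) (D := 3)
    (fun x hx0 hx1 => ?_) (fun x hx => ?_) (by linarith) (by linarith)
  · have h := Real.cos_bound (x := x) (by rw [abs_of_pos hx0]; exact hx1)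
    have e : x ^ (4 : ℝ) = x ^ 4 := by exact_mod_cast Real.rpow_natCast x 4
    rw [abs_of_pos hx0] at h
    rw [e, show Real.cos x - 1 + x ^ 2 / 2 = Real.cos x - (1 - x ^ 2 / 2) by ring]
    have : 0 < x ^ 4 := by positivity
    linarith
  · have e : x ^ (2 : ℝ) = x ^ 2 := by exact_mod_cast Real.rpow_natCast x 2
    rw [e, abs_le]
    have := Real.cos_le_one x
    have := Real.neg_one_le_cos x
    constructor <;> nlinarith

/-- The `k`-th sine moment `J_k(q) = ∫₀^∞ x^{-q} sin^k x dx`. -/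
noncomputable def sinMoment (q : ℝ) (k : ℕ) : ℝ :=
  ∫ x in Ioi (0 : ℝ), x ^ (-q) * Real.sin x ^ k

lemma sinMoment_four_pos {q : ℝ} (hq : 1 < q) (hq' : q < 5) : 0 < sinMoment q 4 := by
  have hnn : 0 ≤ᵐ[volume.restrict (Ioi 0)] fun x : ℝ => x ^ (-q) * Real.sin x ^ 4 := by
    filter_upwards [ae_restrict_mem measurableSet_Ioi] with x hx
    have : (0 : ℝ) ≤ x ^ (-q) := Real.rpow_nonneg (le_of_lt hx) _
    positivity
  refine (setIntegral_pos_iff_support_of_nonneg_ae hnn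
    (integrableOn_rpow_mul_sin_pow le_rfl hq hq')).2 ?_
  have hsub : Ioo 0 Real.pi ⊆
      (Function.support fun x : ℝ => x ^ (-q) * Real.sin x ^ 4) ∩ Ioi 0 := by
    intro x hx
    refine ⟨?_, hx.1⟩
    have := Real.rpow_pos_of_pos hx.1 (-q)
    have := Real.sin_pos_of_pos_of_lt_pi hx.1 hx.2
    exact (by positivity : (0 : ℝ) < x ^ (-q) * Real.sin x ^ 4).ne'
  refine lt_of_lt_of_le ?_ (measure_mono hsub)
  simp [Real.pi_pos]

lemma sin_pow_four_eq (x : ℝ) : Real.sin x ^ 4 =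
    (1 / 8) * ((Real.cos (4 * x) - 1 + (4 * x) ^ 2 / 2)
      - 4 * (Real.cos (2 * x) - 1 + (2 * x) ^ 2 / 2)) := by
  rw [show 4 * x = 2 * (2 * x) by ring, Real.cos_two_mul (2 * x), Real.cos_two_mul x]
  have := Real.sin_sq x
  rw [show Real.sin x ^ 4 = (Real.sin x ^ 2) ^ 2 by ring, this]; ring

lemma sin_pow_six_eq (x : ℝ) : Real.sin x ^ 6 =
    (1 / 32) * (6 * (Real.cos (4 * x) - 1 + (4 * x) ^ 2 / 2)
      - 15 * (Real.cos (2 * x) - 1 + (2 * x) ^ 2 / 2)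
      - (Real.cos (6 * x) - 1 + (6 * x) ^ 2 / 2)) := by
  rw [show 6 * x = 3 * (2 * x) by ring, Real.cos_three_mul, show 4 * x = 2 * (2 * x) by ring,
    Real.cos_two_mul (2 * x), Real.cos_two_mul x]
  have := Real.sin_sq x
  rw [show Real.sin x ^ 6 = (Real.sin x ^ 2) ^ 3 by ring, this]; ring

/-- Both moments are explicit multiples of the single integral
`L = ∫₀^∞ x^{-q} (cos x - 1 + x²/2) dx`. The subtracted Taylor polynomial makes `L` converge for
`3 < q < 5`, and it cancels in the expansions of `sin⁴` and `sin⁶` into cosines. -/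
lemma sinMoment_eq {q : ℝ} (hq : 3 < q) (hq' : q < 5) : ∃ L : ℝ,
    sinMoment q 4 = L / 8 * (4 ^ (q - 1) - 4 * 2 ^ (q - 1)) ∧
    sinMoment q 6 = L / 32 * (6 * 4 ^ (q - 1) - 15 * 2 ^ (q - 1) - 6 ^ (q - 1)) := by
  set g : ℝ → ℝ := fun x => Real.cos x - 1 + x ^ 2 / 2 with hgdef
  have hg : IntegrableOn (fun x : ℝ => x ^ (-q) * g x) (Ioi 0) :=
    integrableOn_rpow_mul_cos_sub hq hq'
  have hi : ∀ c : ℝ, 0 < c → IntegrableOn (fun x : ℝ => x ^ (-q) * g (c * x)) (Ioi 0) :=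
    fun c hc => integrableOn_rpow_comp_mul hc hg
  refine ⟨∫ x in Ioi (0 : ℝ), x ^ (-q) * g x, ?_, ?_⟩
  · have e : sinMoment q 4 = ∫ x in Ioi (0 : ℝ), (1 / 8) * (x ^ (-q) * g (4 * x)
        - 4 * (x ^ (-q) * g (2 * x))) := by
      unfold sinMoment
      congr 1; ext x; rw [sin_pow_four_eq]; simp only [hgdef]; ring
    rw [e, integral_const_mul, integral_sub (hi 4 (by norm_num)) ((hi 2 (by norm_num)).const_mul _),
      integral_const_mul, integral_rpow_comp_mul _ _ (by norm_num : (0:ℝ) < 4),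
      integral_rpow_comp_mul _ _ (by norm_num : (0:ℝ) < 2)]
    ring
  · have e : sinMoment q 6 = ∫ x in Ioi (0 : ℝ), (1 / 32) * (6 * (x ^ (-q) * g (4 * x))
        - 15 * (x ^ (-q) * g (2 * x)) - x ^ (-q) * g (6 * x)) := by
      unfold sinMoment
      congr 1; ext x; rw [sin_pow_six_eq]; simp only [hgdef]; ring
    have h4 := (hi 4 (by norm_num)).const_mul 6
    have h2 := (hi 2 (by norm_num)).const_mul 15
    have h42 : Integrable (fun x : ℝ => 6 * (x ^ (-q) * g (4 * x))
        - 15 * (x ^ (-q) * g (2 * x))) (volume.restrict (Ioi 0)) := h4.sub h2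
    rw [e, integral_const_mul, integral_sub h42 (hi 6 (by norm_num)),
      integral_sub h4 h2, integral_const_mul, integral_const_mul,
      integral_rpow_comp_mul _ _ (by norm_num : (0:ℝ) < 4),
      integral_rpow_comp_mul _ _ (by norm_num : (0:ℝ) < 2),
      integral_rpow_comp_mul _ _ (by norm_num : (0:ℝ) < 6)]
    ring

lemma rho_eq {d : ℝ} (hd : d ∈ Ioo (0.5 : ℝ) 1.5) :
    rho d = 1 - 2 * sinMoment (2 * d + 2) 6 / sinMoment (2 * d + 2) 4 := by
  have h1 : 3 < 2 * d + 2 := by have := hd.1; norm_num at this; linarith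
  have h2 : 2 * d + 2 < 5 := by have := hd.2; norm_num at this; linarith
  obtain ⟨L, h4, h6⟩ := sinMoment_eq h1 h2
  have hpos := sinMoment_four_pos (by linarith : 1 < 2 * d + 2) h2
  set p : ℝ := 2 * d + 1 with hp
  rw [show 2 * d + 2 - 1 = p by rw [hp]; ring] at h4 h6
  have e4 : (4 : ℝ) ^ p = 2 ^ p * 2 ^ p := by
    rw [← Real.mul_rpow (by norm_num) (by norm_num)]; norm_num
  have e6 : (6 : ℝ) ^ p = 2 ^ p * 3 ^ p := by
    rw [← Real.mul_rpow (by norm_num) (by norm_num)]; norm_num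
  have e4' : (4 : ℝ) ^ (d + 0.5) = 2 ^ p := by
    rw [show (4 : ℝ) = 2 ^ (2 : ℝ) by norm_num, ← Real.rpow_mul (by norm_num)]
    congr 1; rw [hp]; ring
  have e9' : (9 : ℝ) ^ (d + 0.5) = 3 ^ p := by
    rw [show (9 : ℝ) = 3 ^ (2 : ℝ) by norm_num, ← Real.rpow_mul (by norm_num)]
    congr 1; rw [hp]; ring
  have e4'' : (4 : ℝ) ^ (d + 1.5) = 4 * 2 ^ p := by
    rw [show d + 1.5 = 1 + (d + 0.5) by ring, Real.rpow_add (by norm_num), e4', Real.rpow_one]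
  have h2p : (0 : ℝ) < 2 ^ p := by positivity
  rw [h4, e4] at hpos
  rw [rho, e4', e9', e4'', h4, h6, e4, e6]
  generalize (2 : ℝ) ^ p = t at *
  generalize (3 : ℝ) ^ p = s at *
  have hL : L ≠ 0 := by rintro rfl; simp at hpos
  have ht : t - 4 ≠ 0 := by
    intro h
    have : t = 4 := by linarith
    subst this; norm_num at hpos
  have ht' : 4 - t ≠ 0 := by intro h; apply ht; linarith
  rw [show t * t - 4 * t = t * (t - 4) by ring]
  have := h2p.ne'
  rw [show (4 - t) = -(t - 4) by ring]
  field_simp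
  ring

/-! ### Comparison of the integrands with a pure power -/

lemma div_pi_le_sin_half {x : ℝ} (hx : x ∈ Ioc 0 Real.pi) : x / Real.pi ≤ Real.sin (x / 2) := by
  have h := Real.mul_le_sin (x := x / 2) (by linarith [hx.1]) (by linarith [hx.2])
  calc x / Real.pi = 2 / Real.pi * (x / 2) := by ring
    _ ≤ _ := h

lemma inv_sin_pow_four_le {x : ℝ} (hx : x ∈ Ioc 0 Real.pi) :
    (Real.sin (x / 2) ^ 4)⁻¹ ≤ Real.pi ^ 4 * (x ^ 4)⁻¹ := by
  have hx0 := hx.1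
  have hpi := Real.pi_pos
  calc (Real.sin (x / 2) ^ 4)⁻¹ ≤ ((x / Real.pi) ^ 4)⁻¹ := by
        gcongr; exact div_pi_le_sin_half hx
    _ = _ := by rw [div_pow, inv_div, div_eq_mul_inv]

lemma abs_inv_sin_pow_four_sub_le {x : ℝ} (hx : x ∈ Ioc 0 Real.pi) :
    |(Real.sin (x / 2) ^ 4)⁻¹ - 16 * (x ^ 4)⁻¹| ≤ Real.pi ^ 4 * (x ^ 2)⁻¹ := by
  have hx0 := hx.1
  have hpi := Real.pi_pos
  have hs0 : 0 < Real.sin (x / 2) := lt_of_lt_of_le (by positivity) (div_pi_le_sin_half hx)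
  have hs1 : Real.sin (x / 2) ≤ x / 2 := Real.sin_le (by positivity)
  have hs2 := Real.sin_gt_sub_cube (x := x / 2) (by positivity)
  have hinv := inv_sin_pow_four_le hx
  set s := Real.sin (x / 2) with hs
  have hx4 : 16 * s ^ 4 ≤ x ^ 4 := by
    have := pow_le_pow_left₀ hs0.le hs1 4
    calc 16 * s ^ 4 ≤ 16 * (x / 2) ^ 4 := by linarith
      _ = x ^ 4 := by ring
  have key : x ^ 4 - 16 * s ^ 4 ≤ x ^ 6 := by
    have h1 : x - 2 * s ≤ x ^ 3 / 24 := by nlinarith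
    have h2 : x + 2 * s ≤ 2 * x := by linarith
    have h3 : x ^ 2 + 4 * s ^ 2 ≤ 2 * x ^ 2 := by nlinarith
    calc x ^ 4 - 16 * s ^ 4 = (x - 2 * s) * (x + 2 * s) * (x ^ 2 + 4 * s ^ 2) := by ring
      _ ≤ (x ^ 3 / 24) * (2 * x) * (2 * x ^ 2) := by
          gcongr
      _ ≤ x ^ 6 := by have : 0 < x ^ 6 := by positivity
                      nlinarith
  have e : (s ^ 4)⁻¹ - 16 * (x ^ 4)⁻¹ = (x ^ 4 - 16 * s ^ 4) * ((x ^ 4)⁻¹ * (s ^ 4)⁻¹) := by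
    field_simp
  rw [e, abs_of_nonneg (mul_nonneg (by linarith) (by positivity))]
  calc (x ^ 4 - 16 * s ^ 4) * ((x ^ 4)⁻¹ * (s ^ 4)⁻¹)
      ≤ x ^ 6 * ((x ^ 4)⁻¹ * (Real.pi ^ 4 * (x ^ 4)⁻¹)) := by gcongr
    _ = _ := by field_simp

/-- The local expansion at `0`, weakened to its first term, holds on the whole of `(0, π]`: away from
`0` the error is bounded by compactness. -/
lemma exists_abs_sub_le {d ε c₀ c₁ : ℝ} {f : ℝ → ℝ} (hε : 0 < ε)
    (hf : ContinuousOn f (Ioc 0 Real.pi))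
    (hfO : (fun x : ℝ => f x - c₀ * x ^ (2 - 2 * d) - c₁ * x ^ (3 : ℝ))
        =O[nhdsWithin 0 (Ioi 0)] fun x : ℝ => x ^ (3 + ε)) :
    ∃ K, 0 ≤ K ∧ ∀ x ∈ Ioc 0 Real.pi, |f x - c₀ * x ^ (2 - 2 * d)| ≤ K * x ^ 3 := by
  obtain ⟨K₁, hK₁, hb⟩ := hfO.exists_nonneg
  obtain ⟨δ, hδ, hsub⟩ := mem_nhdsGT_iff_exists_Ioo_subset.1 hb.bound
  have hδ0 : 0 < δ := hδ
  set η := min δ 1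
  have hη : 0 < η := lt_min hδ one_pos
  have hcont : ContinuousOn (fun x : ℝ => f x - c₀ * x ^ (2 - 2 * d)) (Icc η Real.pi) := by
    refine (hf.mono fun x hx => ⟨hη.trans_le hx.1, hx.2⟩).sub (continuousOn_const.mul ?_)
    exact fun x hx =>
      (Real.continuousAt_rpow_const x _ (Or.inl (hη.trans_le hx.1).ne')).continuousWithinAt
  obtain ⟨B, hB⟩ := isCompact_Icc.exists_bound_of_continuousOn hcont
  refine ⟨(K₁ + |c₁|) + |B| / η ^ 3, by positivity, fun x hx => ?_⟩
  have hx0 := hx.1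
  rcases lt_or_ge x η with h | h
  · have h1 := hsub ⟨hx0, h.trans_le (min_le_left _ _)⟩
    have hx1 : x ≤ 1 := (h.trans_le (min_le_right _ _)).le
    have e3 : x ^ (3 : ℝ) = x ^ 3 := by exact_mod_cast Real.rpow_natCast x 3
    simp only [mem_ofPred_eq, Real.norm_eq_abs, e3] at h1
    rw [Real.rpow_add hx0, e3, abs_of_pos (by positivity : 0 < x ^ 3 * x ^ ε)] at h1
    have h2 : x ^ ε ≤ 1 := Real.rpow_le_one hx0.le hx1 hε.le
    calc |f x - c₀ * x ^ (2 - 2 * d)|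
        = |(f x - c₀ * x ^ (2 - 2 * d) - c₁ * x ^ 3) + c₁ * x ^ 3| := by ring_nf
      _ ≤ |f x - c₀ * x ^ (2 - 2 * d) - c₁ * x ^ 3| + |c₁ * x ^ 3| := abs_add_le _ _
      _ ≤ K₁ * (x ^ 3 * 1) + |c₁| * x ^ 3 := by
          rw [abs_mul, abs_of_pos (by positivity : 0 < x ^ 3)]
          refine add_le_add (h1.trans ?_) le_rfl
          gcongr
      _ = (K₁ + |c₁|) * x ^ 3 := by ring
      _ ≤ _ := mul_le_mul_of_nonneg_right (le_add_of_nonneg_right (by positivity))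
          (by positivity)
  · have h1 := hB x ⟨h, hx.2⟩
    rw [Real.norm_eq_abs] at h1
    calc |f x - c₀ * x ^ (2 - 2 * d)| ≤ |B| := h1.trans (le_abs_self B)
      _ = |B| / η ^ 3 * η ^ 3 := by field_simp
      _ ≤ |B| / η ^ 3 * x ^ 3 := by gcongr
      _ ≤ _ := by gcongr; exact le_add_of_nonneg_left (by positivity)

/-- The weight `f(x) / sin⁴(x/2)` equals `16 c₀ x^{-2d-2}` up to `O(x^{-2d} + x^{-1})`. The first error
comes from `sin⁻⁴(x/2) = 16 x⁻⁴ + O(x⁻²)`, the second from the `c₁ x³` term of `f`. -/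
lemma exists_abs_div_sub_le {d ε c₀ c₁ : ℝ} {f : ℝ → ℝ} (hε : 0 < ε) (hc₀ : 0 < c₀)
    (hf : ContinuousOn f (Ioc 0 Real.pi))
    (hfO : (fun x : ℝ => f x - c₀ * x ^ (2 - 2 * d) - c₁ * x ^ (3 : ℝ))
        =O[nhdsWithin 0 (Ioi 0)] fun x : ℝ => x ^ (3 + ε)) :
    ∃ C, 0 ≤ C ∧ ∀ x ∈ Ioc 0 Real.pi,
      |f x / Real.sin (x / 2) ^ 4 - 16 * c₀ * x ^ (-(2 * d + 2))|
        ≤ C * (x ^ (-(2 * d)) + x⁻¹) := by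
  obtain ⟨K, hK, h⟩ := exists_abs_sub_le hε hf hfO
  have hpi := Real.pi_pos
  refine ⟨K * Real.pi ^ 4 + c₀ * Real.pi ^ 4, by positivity, fun x hx => ?_⟩
  have hx0 := hx.1
  have e1 : x ^ (-(2 * d + 2)) = x ^ (2 - 2 * d) * (x ^ 4)⁻¹ := by
    have : (x ^ 4)⁻¹ = x ^ (-4 : ℝ) := by
      rw [Real.rpow_neg hx0.le]; norm_cast
    rw [this, ← Real.rpow_add hx0]; congr 1; ring
  have e2 : x ^ (-(2 * d)) = x ^ (2 - 2 * d) * (x ^ 2)⁻¹ := by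
    have : (x ^ 2)⁻¹ = x ^ (-2 : ℝ) := by
      rw [Real.rpow_neg hx0.le]; norm_cast
    rw [this, ← Real.rpow_add hx0]; congr 1; ring
  have hs := inv_sin_pow_four_le hx
  have hs' := abs_inv_sin_pow_four_sub_le hx
  have hf' := h x hx
  have hy : 0 < x ^ (2 - 2 * d) := Real.rpow_pos_of_pos hx0 _
  have hsn : 0 ≤ (Real.sin (x / 2) ^ 4)⁻¹ := by positivity
  rw [e1, e2, div_eq_mul_inv]
  generalize x ^ (2 - 2 * d) = y at *
  generalize (Real.sin (x / 2) ^ 4)⁻¹ = S at *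
  calc |f x * S - 16 * c₀ * (y * (x ^ 4)⁻¹)|
      = |(f x - c₀ * y) * S + c₀ * y * (S - 16 * (x ^ 4)⁻¹)| := by congr 1; ring
    _ ≤ |(f x - c₀ * y) * S| + |c₀ * y * (S - 16 * (x ^ 4)⁻¹)| := abs_add_le _ _
    _ = |f x - c₀ * y| * S + c₀ * y * |S - 16 * (x ^ 4)⁻¹| := by
        rw [abs_mul, abs_mul, abs_of_nonneg hsn, abs_of_pos (by positivity : 0 < c₀ * y)]
    _ ≤ K * x ^ 3 * (Real.pi ^ 4 * (x ^ 4)⁻¹) + c₀ * y * (Real.pi ^ 4 * (x ^ 2)⁻¹) := by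
        gcongr
    _ = K * Real.pi ^ 4 * x⁻¹ + c₀ * Real.pi ^ 4 * (y * (x ^ 2)⁻¹) := by
        field_simp
    _ ≤ _ := by
        have h1 : 0 ≤ c₀ * Real.pi ^ 4 * x⁻¹ := by positivity
        have h2 : 0 ≤ K * Real.pi ^ 4 * (y * (x ^ 2)⁻¹) := by positivity
        linarith

/-! ### Asymptotics of the integrals -/

lemma integrableOn_inv_mul_sin_pow (c : ℝ) :
    IntegrableOn (fun x : ℝ => x⁻¹ * Real.sin (c * x) ^ 4) (Ioc 0 Real.pi) := by
  have hi : IntegrableOn (fun _ : ℝ => |c|) (Ioc 0 Real.pi) := by simp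
  refine Integrable.mono' hi (by fun_prop) ?_
  filter_upwards [ae_restrict_mem measurableSet_Ioc] with x hx
  have hx0 := hx.1
  rw [norm_mul, Real.norm_eq_abs, Real.norm_eq_abs, abs_of_pos (inv_pos.2 hx0), abs_pow]
  calc x⁻¹ * |Real.sin (c * x)| ^ 4 ≤ x⁻¹ * |Real.sin (c * x)| := by
        gcongr
        exact pow_le_of_le_one (abs_nonneg _) (Real.abs_sin_le_one _) (by norm_num)
    _ ≤ x⁻¹ * |c * x| := by gcongr ?_ * ?_; exact Real.abs_sin_le_abs
    _ = |c| := by rw [abs_mul, abs_of_pos hx0]; field_simp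

/-- This integral is the source of the logarithm. It is split at `1/m`: below, `|sin y| ≤ |y|` bounds
the integrand by `m`; above, `sin⁴ ≤ 1` leaves `∫ dx/x`. -/
lemma integral_inv_mul_sin_pow_le {m : ℝ} (hm : 3 ≤ m) :
    ∫ x in Ioc 0 Real.pi, x⁻¹ * Real.sin (m / 2 * x) ^ 4 ≤ 5 * Real.log m := by
  have hm0 : 0 < m := by linarith
  have hpi := Real.pi_gt_three
  have hm1 : m⁻¹ ≤ Real.pi := (inv_le_one_of_one_le₀ (by linarith)).trans (by linarith)
  have hi := integrableOn_inv_mul_sin_pow (m / 2)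
  have hlog : 1 ≤ Real.log m := by
    rw [Real.le_log_iff_exp_le hm0]; linarith [Real.exp_one_lt_d9]
  rw [← Ioc_union_Ioc_eq_Ioc (inv_pos.2 hm0).le hm1,
    setIntegral_union (Ioc_disjoint_Ioc_of_le le_rfl) measurableSet_Ioc
      (hi.mono_set (Ioc_subset_Ioc_right hm1))
      (hi.mono_set (Ioc_subset_Ioc_left (inv_pos.2 hm0).le))]
  have h1 : ∫ x in Ioc 0 m⁻¹, x⁻¹ * Real.sin (m / 2 * x) ^ 4 ≤ 1 := by
    calc ∫ x in Ioc 0 m⁻¹, x⁻¹ * Real.sin (m / 2 * x) ^ 4 ≤ ∫ x in Ioc 0 m⁻¹, m := by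
          refine setIntegral_mono_on (hi.mono_set (Ioc_subset_Ioc_right hm1)) (by simp)
            measurableSet_Ioc fun x hx => ?_
          have hx0 := hx.1
          have : Real.sin (m / 2 * x) ^ 4 ≤ m / 2 * x := by
            calc Real.sin (m / 2 * x) ^ 4 ≤ |Real.sin (m / 2 * x)| ^ 4 := by
                  rw [← abs_pow]; exact le_abs_self _
              _ ≤ |Real.sin (m / 2 * x)| :=
                  pow_le_of_le_one (abs_nonneg _) (Real.abs_sin_le_one _) (by norm_num)
              _ ≤ |m / 2 * x| := Real.abs_sin_le_abs
              _ = _ := abs_of_pos (by positivity)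
          calc x⁻¹ * Real.sin (m / 2 * x) ^ 4 ≤ x⁻¹ * (m / 2 * x) := by gcongr
            _ = m / 2 := by field_simp
            _ ≤ m := by linarith
      _ = 1 := by
          rw [setIntegral_const]
          simp [Measure.real, hm0.le, hm0.ne']
  have h2 : ∫ x in Ioc m⁻¹ Real.pi, x⁻¹ * Real.sin (m / 2 * x) ^ 4
      ≤ Real.log Real.pi + Real.log m := by
    have hinv : IntegrableOn (fun x : ℝ => x⁻¹) (Ioc m⁻¹ Real.pi) := by
      rw [← intervalIntegrable_iff_integrableOn_Ioc_of_le hm1]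
      refine intervalIntegral.intervalIntegrable_inv (fun x hx => ?_) continuousOn_id
      rw [uIcc_of_le hm1] at hx
      exact ((inv_pos.2 hm0).trans_le hx.1).ne'
    calc ∫ x in Ioc m⁻¹ Real.pi, x⁻¹ * Real.sin (m / 2 * x) ^ 4
        ≤ ∫ x in Ioc m⁻¹ Real.pi, x⁻¹ := by
          refine setIntegral_mono_on (hi.mono_set (Ioc_subset_Ioc_left (inv_pos.2 hm0).le)) hinv
            measurableSet_Ioc fun x hx => ?_
          have hx0 : 0 < x := (inv_pos.2 hm0).trans hx.1
          refine mul_le_of_le_one_right (by positivity) ?_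
          calc Real.sin (m / 2 * x) ^ 4 ≤ |Real.sin (m / 2 * x)| ^ 4 := by
                  rw [← abs_pow]; exact le_abs_self _
            _ ≤ 1 := pow_le_one₀ (abs_nonneg _) (Real.abs_sin_le_one _)
      _ = Real.log Real.pi + Real.log m := by
          rw [← intervalIntegral.integral_of_le hm1,
            integral_inv_of_pos (inv_pos.2 hm0) Real.pi_pos, div_inv_eq_mul,
            Real.log_mul Real.pi_ne_zero hm0.ne']
  have h3 : Real.log Real.pi ≤ 3 := by
    have := Real.log_le_sub_one_of_pos Real.pi_pos
    linarith [Real.pi_lt_four]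
  linarith

/-- Asymptotics of the two integrals in `rIR`: the leading term is `16 c₀ (m/2)^{2d+1} J_k(2d+2)`
and the error is `O(m^{2d-1} + log m)`. -/
lemma exists_abs_integral_sub_le {d ε c₀ c₁ : ℝ} {f : ℝ → ℝ}
    (hd : 1 / 2 < d) (hd' : d < 3 / 2) (hε : 0 < ε) (hc₀ : 0 < c₀)
    (hf : ContinuousOn f (Ioc 0 Real.pi))
    (hfO : (fun x : ℝ => f x - c₀ * x ^ (2 - 2 * d) - c₁ * x ^ (3 : ℝ))
        =O[nhdsWithin 0 (Ioi 0)] fun x : ℝ => x ^ (3 + ε)) :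
    ∃ C, 0 ≤ C ∧ ∀ k : ℕ, 4 ≤ k → ∀ m : ℕ, 3 ≤ m →
      |(∫ x in (0 : ℝ)..Real.pi, f x * Real.sin (m * x / 2) ^ k / Real.sin (x / 2) ^ 4)
          - 16 * c₀ * (((m : ℝ) / 2) ^ (2 * d + 1) * sinMoment (2 * d + 2) k)|
        ≤ C * ((m : ℝ) ^ (2 * d - 1) + Real.log m) := by
  obtain ⟨C, hC, hw⟩ := exists_abs_div_sub_le hε hc₀ hf hfO
  set T := ∫ x in Ioi Real.pi, x ^ (-(2 * d + 2)) with hT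
  have hTi : IntegrableOn (fun x : ℝ => x ^ (-(2 * d + 2))) (Ioi Real.pi) :=
    integrableOn_Ioi_rpow_of_lt (by linarith) Real.pi_pos
  have hT0 : 0 ≤ T := setIntegral_nonneg measurableSet_Ioi fun x hx =>
    Real.rpow_nonneg (Real.pi_pos.trans hx).le _
  have hJ : 0 < sinMoment (2 * d) 4 := sinMoment_four_pos (by linarith) (by linarith)
  refine ⟨16 * c₀ * T + C * (sinMoment (2 * d) 4 + 5), by positivity, fun k hk m hm => ?_⟩
  have hm3 : (3 : ℝ) ≤ m := by exact_mod_cast hm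
  have hm0 : (0 : ℝ) < m := by linarith
  have hc : (0 : ℝ) < (m : ℝ) / 2 := by positivity
  have hlog : 1 ≤ Real.log m := by
    rw [Real.le_log_iff_exp_le hm0]; linarith [Real.exp_one_lt_d9]
  set A : ℝ → ℝ := fun x => x ^ (-(2 * d + 2)) * Real.sin (m / 2 * x) ^ k with hA
  set F : ℝ → ℝ := fun x => f x * Real.sin (m * x / 2) ^ k / Real.sin (x / 2) ^ 4 with hF
  set B : ℝ → ℝ := fun x => x ^ (-(2 * d)) * Real.sin (m / 2 * x) ^ 4 with hB
  set D : ℝ → ℝ := fun x => x⁻¹ * Real.sin (m / 2 * x) ^ 4 with hD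
  have hAi : IntegrableOn A (Ioi 0) := integrableOn_rpow_comp_mul hc
    (integrableOn_rpow_mul_sin_pow hk (by linarith) (by linarith))
  have hBi : IntegrableOn B (Ioi 0) :=
    integrableOn_rpow_comp_mul (g := fun x => Real.sin x ^ 4) hc
      (integrableOn_rpow_mul_sin_pow le_rfl (by linarith) (by linarith))
  have hDi : IntegrableOn D (Ioc 0 Real.pi) := integrableOn_inv_mul_sin_pow _
  have hsub : Ioc 0 Real.pi ⊆ Ioi 0 := Ioc_subset_Ioi_self
  have hBD : IntegrableOn (fun x => C * (B x + D x)) (Ioc 0 Real.pi) :=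
    ((hBi.mono_set hsub).add hDi).const_mul C
  have hAi' : IntegrableOn (fun x => 16 * c₀ * A x) (Ioc 0 Real.pi) :=
    (hAi.mono_set hsub).const_mul _
  have hle : ∀ x ∈ Ioc 0 Real.pi, |F x - 16 * c₀ * A x| ≤ C * (B x + D x) := by
    intro x hx
    have hx0 := hx.1
    have hsin : |Real.sin (m / 2 * x)| ^ k ≤ Real.sin (m / 2 * x) ^ 4 := by
      calc |Real.sin (m / 2 * x)| ^ k ≤ |Real.sin (m / 2 * x)| ^ 4 :=
            pow_le_pow_of_le_one (abs_nonneg _) (Real.abs_sin_le_one _) hk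
        _ = _ := by rw [← abs_pow, abs_of_nonneg (by positivity)]
    calc |F x - 16 * c₀ * A x|
        = |(f x / Real.sin (x / 2) ^ 4 - 16 * c₀ * x ^ (-(2 * d + 2)))
            * Real.sin (m / 2 * x) ^ k| := by
          simp only [hF, hA]
          rw [show (m : ℝ) * x / 2 = m / 2 * x by ring]
          congr 1; ring
      _ ≤ C * (x ^ (-(2 * d)) + x⁻¹) * Real.sin (m / 2 * x) ^ 4 := by
          rw [abs_mul, abs_pow]
          exact mul_le_mul (hw x hx) hsin (by positivity) (by positivity)
      _ = C * (B x + D x) := by simp only [hB, hD]; ring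
  have hFm : AEStronglyMeasurable F (volume.restrict (Ioc 0 Real.pi)) := by
    have := hf.aestronglyMeasurable measurableSet_Ioc (μ := volume)
    refine (this.aemeasurable.mul ?_ |>.div ?_).aestronglyMeasurable <;> fun_prop
  have hdi : IntegrableOn (fun x => F x - 16 * c₀ * A x) (Ioc 0 Real.pi) := by
    refine Integrable.mono' hBD (hFm.sub hAi'.aestronglyMeasurable) ?_
    filter_upwards [ae_restrict_mem measurableSet_Ioc] with x hx using hle x hx
  have hFi : IntegrableOn F (Ioc 0 Real.pi) := by
    refine (hdi.add hAi').congr (Eventually.of_forall fun x => ?_)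
    simp
  have hsplit : ∫ x in Ioi (0 : ℝ), A x
      = (∫ x in Ioc 0 Real.pi, A x) + ∫ x in Ioi Real.pi, A x := by
    rw [← Ioc_union_Ioi_eq_Ioi Real.pi_pos.le]
    exact setIntegral_union (Ioc_disjoint_Ioi le_rfl) measurableSet_Ioi (hAi.mono_set hsub)
      (hAi.mono_set (Ioi_subset_Ioi Real.pi_pos.le))
  have hscale : ∫ x in Ioi (0 : ℝ), A x
      = ((m : ℝ) / 2) ^ (2 * d + 1) * sinMoment (2 * d + 2) k := by
    have := integral_rpow_comp_mul (fun x => Real.sin x ^ k) (2 * d + 2) hc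
    rw [show 2 * d + 2 - 1 = 2 * d + 1 by ring] at this
    exact this
  have htail : |∫ x in Ioi Real.pi, A x| ≤ T := by
    rw [← Real.norm_eq_abs]
    refine norm_integral_le_of_norm_le hTi ?_
    filter_upwards [ae_restrict_mem measurableSet_Ioi] with x hx
    have hx0 : 0 < x := Real.pi_pos.trans hx
    simp only [hA]
    rw [norm_mul, norm_pow, Real.norm_eq_abs, Real.norm_eq_abs,
      abs_of_pos (Real.rpow_pos_of_pos hx0 _)]
    exact mul_le_of_le_one_right (Real.rpow_nonneg hx0.le _)
      (pow_le_one₀ (abs_nonneg _) (Real.abs_sin_le_one _))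
  have hBle : ∫ x in Ioc 0 Real.pi, B x ≤ (m : ℝ) ^ (2 * d - 1) * sinMoment (2 * d) 4 := by
    calc ∫ x in Ioc 0 Real.pi, B x ≤ ∫ x in Ioi (0 : ℝ), B x := by
          refine setIntegral_mono_set hBi ?_ hsub.eventuallyLE
          filter_upwards [ae_restrict_mem measurableSet_Ioi] with x hx
          have : (0 : ℝ) ≤ x ^ (-(2 * d)) := Real.rpow_nonneg (le_of_lt hx) _
          simp only [hB]; positivity
      _ = ((m : ℝ) / 2) ^ (2 * d - 1) * sinMoment (2 * d) 4 :=
          integral_rpow_comp_mul (fun x => Real.sin x ^ 4) (2 * d) hc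
      _ ≤ _ := by
          gcongr
          · linarith
          · linarith
  have hdiff : |∫ x in Ioc 0 Real.pi, (F x - 16 * c₀ * A x)|
      ≤ C * ((m : ℝ) ^ (2 * d - 1) * sinMoment (2 * d) 4 + 5 * Real.log m) := by
    calc |∫ x in Ioc 0 Real.pi, (F x - 16 * c₀ * A x)|
        ≤ ∫ x in Ioc 0 Real.pi, C * (B x + D x) := by
          rw [← Real.norm_eq_abs]
          refine norm_integral_le_of_norm_le hBD ?_
          filter_upwards [ae_restrict_mem measurableSet_Ioc] with x hx using hle x hx
      _ = C * ((∫ x in Ioc 0 Real.pi, B x) + ∫ x in Ioc 0 Real.pi, D x) := by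
          rw [integral_const_mul, integral_add (hBi.mono_set hsub) hDi]
      _ ≤ _ := by gcongr; exact integral_inv_mul_sin_pow_le hm3
  rw [integral_sub hFi hAi', integral_const_mul] at hdiff
  rw [intervalIntegral.integral_of_le Real.pi_pos.le, ← hscale, hsplit]
  have hpw : 0 < (m : ℝ) ^ (2 * d - 1) := by positivity
  calc |(∫ x in Ioc 0 Real.pi, F x)
        - 16 * c₀ * ((∫ x in Ioc 0 Real.pi, A x) + ∫ x in Ioi Real.pi, A x)|
      = |((∫ x in Ioc 0 Real.pi, F x) - 16 * c₀ * ∫ x in Ioc 0 Real.pi, A x)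
          - 16 * c₀ * ∫ x in Ioi Real.pi, A x| := by congr 1; ring
    _ ≤ |(∫ x in Ioc 0 Real.pi, F x) - 16 * c₀ * ∫ x in Ioc 0 Real.pi, A x|
          + |16 * c₀ * ∫ x in Ioi Real.pi, A x| := abs_sub _ _
    _ ≤ C * ((m : ℝ) ^ (2 * d - 1) * sinMoment (2 * d) 4 + 5 * Real.log m)
          + 16 * c₀ * T := by
        rw [abs_mul (16 * c₀), abs_of_pos (by positivity : 0 < 16 * c₀)]
        gcongr
    _ ≤ _ := by
        have h1 : 0 ≤ 16 * c₀ * T * (m : ℝ) ^ (2 * d - 1) := by positivity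
        have h2 : 0 ≤ C * (5 * (m : ℝ) ^ (2 * d - 1)) := by positivity
        have h3 : 0 ≤ C * (sinMoment (2 * d) 4 * Real.log m) := by positivity
        have h4 : 0 ≤ 16 * c₀ * T * (Real.log m - 1) :=
          mul_nonneg (by positivity) (by linarith)
        linarith

/-! ### The quotient -/

lemma isLittleO_error {d : ℝ} (hd : 1 / 2 < d) :
    (fun m : ℕ => (m : ℝ) ^ (2 * d - 1) + Real.log m)
      =o[atTop] fun m : ℕ => (m : ℝ) ^ (2 * d + 1) := by
  have h1 : (fun x : ℝ => x ^ (2 * d - 1)) =o[atTop] fun x : ℝ => x ^ (2 * d + 1) := by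
    refine (isLittleO_iff_tendsto' ?_).2 ?_
    · filter_upwards [eventually_gt_atTop 0] with x hx h
      exact absurd h (Real.rpow_pos_of_pos hx _).ne'
    · refine (tendsto_rpow_neg_atTop (two_pos : (0 : ℝ) < 2)).congr' ?_
      filter_upwards [eventually_gt_atTop 0] with x hx
      rw [← Real.rpow_sub hx]; congr 1; ring
  have h2 : (fun x : ℝ => Real.log x) =o[atTop] fun x : ℝ => x ^ (2 * d + 1) :=
    isLittleO_log_rpow_atTop (by linarith)
  exact (h1.add h2).comp_tendsto tendsto_natCast_atTop_atTop

/-- Stability of a quotient: if `I₄`, `I₆` are within `e` of `a M J₄`, `a M J₆` and `e` is at most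
half of `a M J₄`, then `I₆ / I₄` is within a constant times `e / (a M)` of `J₆ / J₄`. -/
lemma abs_div_sub_div_le {a M J₄ J₆ I₄ I₆ e : ℝ} (ha : 0 < a) (hM : 0 < M) (hJ : 0 < J₄)
    (h4 : |I₄ - a * (M * J₄)| ≤ e) (h6 : |I₆ - a * (M * J₆)| ≤ e) (he : e ≤ a * M * J₄ / 2) :
    |J₆ / J₄ - I₆ / I₄| ≤ (|J₆| + J₄) * e / (J₄ * (a * M * J₄ / 2)) := by
  have hq : 0 < a * M * J₄ / 2 := by positivity
  have hI : a * M * J₄ / 2 ≤ I₄ := by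
    have := (abs_le.1 h4).1
    linarith
  have hI0 : 0 < I₄ := hq.trans_le hI
  have hnum : J₆ / J₄ - I₆ / I₄
      = (J₆ * (I₄ - a * (M * J₄)) - J₄ * (I₆ - a * (M * J₆))) / (J₄ * I₄) := by
    field_simp; ring
  rw [hnum, abs_div, abs_of_pos (by positivity : 0 < J₄ * I₄)]
  have he0 : 0 ≤ e := (abs_nonneg _).trans h4
  -- The main terms cancel in the numerator, so only the errors contribute.
  refine div_le_div₀ (by positivity) ?_ (by positivity) (by gcongr)
  calc |J₆ * (I₄ - a * (M * J₄)) - J₄ * (I₆ - a * (M * J₆))|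
      ≤ |J₆ * (I₄ - a * (M * J₄))| + |J₄ * (I₆ - a * (M * J₆))| := abs_sub _ _
    _ ≤ |J₆| * e + J₄ * e := by
        rw [abs_mul, abs_mul, abs_of_pos hJ]; gcongr
    _ = _ := by ring

end ExpansionLemmas

/-- Case `β = 2d+1` of the expansion of `r_m`:
`r_m = ρ(d) + O(m^{-2d-1} log m + m^{-2})` as the integer `m → ∞`. -/
theorem stmt_16 (d β ε c₀ c₁ : ℝ) (f : ℝ → ℝ)
    (hd : d ∈ Set.Ioo (0.5 : ℝ) 1.5) (hβ : 0 < β) (hε : 0 < ε) (hc₀ : 0 < c₀)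
    (hf : ContinuousOn f (Set.Ioc 0 Real.pi))
    (hfO : (fun x : ℝ => f x - c₀ * x ^ (2 - 2 * d) - c₁ * x ^ (2 - 2 * d + β))
        =O[nhdsWithin 0 (Set.Ioi 0)] fun x : ℝ => x ^ (2 - 2 * d + β + ε))
    (hβd : β = 2 * d + 1) :
    (fun m : ℕ => rIR f m - rho d)
      =O[atTop] fun m : ℕ => (m : ℝ) ^ (-2 * d - 1) * Real.log m + (m : ℝ) ^ (-2 : ℝ) := by
  have hd1 : 1 / 2 < d := by have := hd.1; norm_num at this ⊢; linarith
  have hd2 : d < 3 / 2 := by have := hd.2; norm_num at this ⊢; linarith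
  rw [show 2 - 2 * d + β = 3 by rw [hβd]; ring] at hfO
  obtain ⟨C, hC, hI⟩ := exists_abs_integral_sub_le hd1 hd2 hε hc₀ hf hfO
  have hJ : 0 < sinMoment (2 * d + 2) 4 := sinMoment_four_pos (by linarith) (by linarith)
  rw [rho_eq hd]
  set J₄ := sinMoment (2 * d + 2) 4
  set J₆ := sinMoment (2 * d + 2) 6
  have hsmall := (isLittleO_error hd1).const_mul_left C
  have h2p : (0 : ℝ) < 2 ^ (2 * d + 1) := by positivity
  set t : ℝ := 2 ^ (2 * d + 1)
  have hκ : 0 < 16 * c₀ * J₄ / (2 * t) := by positivity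
  refine IsBigO.of_bound (2 * ((|J₆| + J₄) * C / (J₄ * (16 * c₀ * J₄ / (2 * t))))) ?_
  filter_upwards [hsmall.bound hκ, eventually_ge_atTop 3] with m hm hm3
  have hm3' : (3 : ℝ) ≤ m := by exact_mod_cast hm3
  have hm0 : (0 : ℝ) < m := by linarith
  have hlog : 0 ≤ Real.log m := Real.log_nonneg (by linarith)
  have hM : ((m : ℝ) / 2) ^ (2 * d + 1) = (m : ℝ) ^ (2 * d + 1) / t :=
    Real.div_rpow hm0.le (by norm_num) _
  have hP : 0 < (m : ℝ) ^ (2 * d + 1) := by positivity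
  have e1 : (m : ℝ) ^ (2 * d - 1) = (m : ℝ) ^ (2 * d + 1) * (m : ℝ) ^ (-2 : ℝ) := by
    rw [← Real.rpow_add hm0]; congr 1; ring
  have e2 : (m : ℝ) ^ (-2 * d - 1) = ((m : ℝ) ^ (2 * d + 1))⁻¹ := by
    rw [← Real.rpow_neg hm0.le]; congr 1; ring
  have hg : (m : ℝ) ^ (2 * d - 1) + Real.log m = (m : ℝ) ^ (2 * d + 1) *
      ((m : ℝ) ^ (-2 * d - 1) * Real.log m + (m : ℝ) ^ (-2 : ℝ)) := by
    rw [e1, e2]; field_simp; ring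
  have h4 := hI 4 le_rfl m hm3
  have h6 := hI 6 (by norm_num) m hm3
  rw [hM] at h4 h6
  have hG : 0 ≤ (m : ℝ) ^ (-2 * d - 1) * Real.log m + (m : ℝ) ^ (-2 : ℝ) := by positivity
  -- After this rewriting every error is the leading power `P` times the claimed rate `G`.
  rw [hg] at h4 h6 hm
  rw [Real.norm_eq_abs, Real.norm_eq_abs, abs_of_pos hP] at hm
  rw [Real.norm_eq_abs, Real.norm_eq_abs, abs_of_nonneg hG]
  generalize (m : ℝ) ^ (-2 * d - 1) * Real.log m + (m : ℝ) ^ (-2 : ℝ) = G at *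
  generalize (m : ℝ) ^ (2 * d + 1) = P at *
  have he : C * (P * G) ≤ 16 * c₀ * (P / t) * J₄ / 2 := by
    calc C * (P * G) ≤ _ := le_abs_self _
      _ ≤ _ := hm
      _ = _ := by field_simp
  have key := abs_div_sub_div_le (by positivity : 0 < 16 * c₀) (by positivity : 0 < P / t) hJ
    h4 h6 he
  unfold rIR
  generalize (∫ x in (0 : ℝ)..Real.pi,
    f x * Real.sin (m * x / 2) ^ 6 / Real.sin (x / 2) ^ 4) = I₆ at *
  generalize (∫ x in (0 : ℝ)..Real.pi,
    f x * Real.sin (m * x / 2) ^ 4 / Real.sin (x / 2) ^ 4) = I₄ at *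
  calc |1 - 2 * I₆ / I₄ - (1 - 2 * J₆ / J₄)| = 2 * |J₆ / J₄ - I₆ / I₄| := by
        rw [← abs_of_pos (two_pos : (0 : ℝ) < 2), ← abs_mul]
        simp only [abs_of_pos (two_pos : (0 : ℝ) < 2)]
        congr 1; ring
    _ ≤ 2 * ((|J₆| + J₄) * (C * (P * G)) / (J₄ * (16 * c₀ * (P / t) * J₄ / 2))) := by gcongr
    _ = _ := by field_simp
end

section
/- There exists a constant C > 0 such that for all integers m ≥ 1 and j ≥ m, |∫₀^π cos(jx)·f(x)·sin⁴(mx/2)/sin⁴(x/2) dx| ≤ C·m³/j. -/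
/-!
Write `D x = sin (m x / 2) / sin (x / 2)`, so the integrand is `cos (j x) * (f x * D x ^ 4)`.
Since `f` tends to `0` at `0⁺` and `|f'| ≤ c₀'`, we have `|f x| ≤ c₀' x` on `(0, π]`. One
integration by parts (the boundary terms vanish, because `f * D ^ 4 → 0` at `0⁺` and
`sin (j π) = 0`) gains the factor `1 / j` and leaves `∫ |(f * D ^ 4)'|` to be bounded by a
multiple of `m ^ 3`.

For this, `|D| ≤ m`, `x |D| ≤ π` and `x |D'| ≤ π m` give
`|(f * D ^ 4)'| ≤ c₀' D ^ 4 + 4 π c₀' m |D| ^ 3 ≤ c₀' (1 + 4 π) m ^ 2 D ^ 2`,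
while the first two of these bounds combine to `D ^ 2 ≤ (1 + π ^ 2) m ^ 2 / (1 + (m x) ^ 2)`, whose
integral over `(0, π)` is at most `(1 + π ^ 2) m π / 2` by the arctangent primitive.
-/

open MeasureTheory Filter Asymptotics

/-- Integration by parts against `cos (j x)` for a function that is differentiable only on
`(0, π]` and vanishes at `0⁺`; both boundary terms are zero. -/
lemma abs_integral_cos_mul_le {g g' h : ℝ → ℝ} {A : ℝ} {j : ℕ} (hj : 0 < j)
    (hg : ∀ x ∈ Set.Ioc (0 : ℝ) Real.pi, HasDerivAt g (g' x) x)
    (hg' : ContinuousOn g' (Set.Ioc 0 Real.pi))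
    (hgA : ∀ x ∈ Set.Ioc (0 : ℝ) Real.pi, |g x| ≤ A * x)
    (hgh : ∀ x ∈ Set.Ioc (0 : ℝ) Real.pi, |g' x| ≤ h x) (hh : Continuous h) :
    |∫ x in (0 : ℝ)..Real.pi, Real.cos (j * x) * g x|
      ≤ (∫ x in (0 : ℝ)..Real.pi, h x) / j := by
  have hj' : (0 : ℝ) < j := by exact_mod_cast hj
  have hgc : ContinuousOn g (Set.Ioc 0 Real.pi) := fun x hx =>
    (hg x hx).continuousAt.continuousWithinAt
  have i2 : IntervalIntegrable (fun x => Real.sin (j * x) * g' x) volume 0 Real.pi := by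
    rw [intervalIntegrable_iff_integrableOn_Ioc_of_le Real.pi_pos.le]
    refine Integrable.mono' (g := h) (hh.integrableOn_Ioc) ?_ ?_
    · exact ContinuousOn.aestronglyMeasurable (by fun_prop) measurableSet_Ioc
    · refine (ae_restrict_iff' measurableSet_Ioc).2 (Eventually.of_forall fun x hx => ?_)
      rw [Real.norm_eq_abs, abs_mul]
      nlinarith [Real.abs_sin_le_one (j * x), abs_nonneg (g' x), hgh x hx]
  have i1 : IntervalIntegrable (fun x => Real.cos (j * x) * g x) volume 0 Real.pi := by
    rw [intervalIntegrable_iff_integrableOn_Ioc_of_le Real.pi_pos.le]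
    refine Integrable.mono' (g := fun x => A * x)
      ((by fun_prop : Continuous fun x : ℝ => A * x).integrableOn_Ioc) ?_ ?_
    · exact ContinuousOn.aestronglyMeasurable (by fun_prop) measurableSet_Ioc
    · refine (ae_restrict_iff' measurableSet_Ioc).2 (Eventually.of_forall fun x hx => ?_)
      rw [Real.norm_eq_abs, abs_mul]
      nlinarith [Real.abs_cos_le_one (j * x), abs_nonneg (g x), hgA x hx]
  have key : ∫ x in (0 : ℝ)..Real.pi,
      (j * (Real.cos (j * x) * g x) + Real.sin (j * x) * g' x) = 0 - 0 := by
    refine intervalIntegral.integral_eq_sub_of_hasDerivAt_of_tendsto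
      (f := fun x => Real.sin (j * x) * g x) Real.pi_pos ?_ ((i1.const_mul _).add i2) ?_ ?_
    · intro x hx
      have h1 : HasDerivAt (fun x : ℝ => Real.sin (j * x)) (Real.cos (j * x) * (j * 1)) x :=
        ((hasDerivAt_id x).const_mul (j : ℝ)).sin
      refine (h1.mul (hg x ⟨hx.1, hx.2.le⟩)).congr_deriv ?_
      ring
    · refine squeeze_zero_norm' (a := fun x => A * x) ?_ ?_
      · filter_upwards [Ioc_mem_nhdsGT Real.pi_pos] with x hx
        rw [Real.norm_eq_abs, abs_mul]
        nlinarith [Real.abs_sin_le_one (j * x), abs_nonneg (g x), hgA x hx]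
      · have : Tendsto (fun x : ℝ => A * x) (nhds 0) (nhds (A * 0)) :=
          (by fun_prop : Continuous fun x : ℝ => A * x).tendsto 0
        rw [mul_zero] at this
        exact this.mono_left nhdsWithin_le_nhds
    · have hc : ContinuousAt (fun x => Real.sin (j * x) * g x) Real.pi :=
        ContinuousAt.mul (by fun_prop) (hg _ ⟨Real.pi_pos, le_rfl⟩).continuousAt
      have := hc.tendsto
      simp only [Real.sin_nat_mul_pi, zero_mul] at this
      exact this.mono_left nhdsWithin_le_nhds
  rw [intervalIntegral.integral_add (i1.const_mul _) i2, intervalIntegral.integral_const_mul] at key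
  have hb : |∫ x in (0 : ℝ)..Real.pi, Real.sin (j * x) * g' x| ≤ ∫ x in (0 : ℝ)..Real.pi, h x := by
    rw [← Real.norm_eq_abs]
    refine intervalIntegral.norm_integral_le_of_norm_le Real.pi_pos.le
      (Eventually.of_forall fun x hx => ?_) (hh.intervalIntegrable _ _)
    rw [Real.norm_eq_abs, abs_mul]
    nlinarith [Real.abs_sin_le_one (j * x), abs_nonneg (g' x), hgh x hx]
  rw [le_div_iff₀ hj', ← abs_of_pos hj', ← abs_mul, abs_of_pos hj']
  rw [show (∫ x in (0 : ℝ)..Real.pi, Real.cos (j * x) * g x) * j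
    = -∫ x in (0 : ℝ)..Real.pi, Real.sin (j * x) * g' x by linarith, abs_neg]
  exact hb

lemma abs_sin_nat_mul_le (n : ℕ) (y : ℝ) : |Real.sin (n * y)| ≤ n * |Real.sin y| := by
  induction n with
  | zero => simp
  | succ n ih =>
    push_cast
    rw [add_mul, one_mul, Real.sin_add]
    refine (abs_add_le _ _).trans ?_
    rw [abs_mul, abs_mul]
    nlinarith [Real.abs_cos_le_one y, Real.abs_cos_le_one (n * y), abs_nonneg (Real.sin y),
      abs_nonneg (Real.sin (n * y))]

/-- The quotient `sin (m x / 2) / sin (x / 2)`; at `x = 0` it takes the junk value `0`. -/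
noncomputable def dirichletQuot (m : ℕ) (x : ℝ) : ℝ := Real.sin (m * x / 2) / Real.sin (x / 2)

/-- The derivative of `dirichletQuot m` on `(0, π]`. -/
noncomputable def dirichletQuotDeriv (m : ℕ) (x : ℝ) : ℝ :=
  (Real.cos (m * x / 2) * (m / 2) * Real.sin (x / 2)
    - Real.sin (m * x / 2) * (Real.cos (x / 2) * (1 / 2))) / Real.sin (x / 2) ^ 2

lemma le_pi_mul_sin_half {x : ℝ} (hx : x ∈ Set.Ioc (0 : ℝ) Real.pi) :
    x ≤ Real.pi * Real.sin (x / 2) := by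
  have h := Real.mul_le_sin (x := x / 2) (by linarith [hx.1]) (by linarith [hx.2])
  have hp := Real.pi_pos
  calc x = Real.pi * (2 / Real.pi * (x / 2)) := by field_simp
    _ ≤ _ := by gcongr

lemma sin_half_pos {x : ℝ} (hx : x ∈ Set.Ioc (0 : ℝ) Real.pi) : 0 < Real.sin (x / 2) :=
  Real.sin_pos_of_pos_of_lt_pi (by linarith [hx.1]) (by linarith [hx.1, hx.2])

lemma hasDerivAt_dirichletQuot (m : ℕ) {x : ℝ} (hx : x ∈ Set.Ioc (0 : ℝ) Real.pi) :
    HasDerivAt (dirichletQuot m) (dirichletQuotDeriv m x) x := by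
  have h1 : HasDerivAt (fun x : ℝ => Real.sin (m * x / 2)) (Real.cos (m * x / 2) * (m / 2)) x := by
    have := (((hasDerivAt_id x).const_mul (m : ℝ)).div_const 2).sin
    simpa using this
  have h2 : HasDerivAt (fun x : ℝ => Real.sin (x / 2)) (Real.cos (x / 2) * (1 / 2)) x :=
    ((hasDerivAt_id x).div_const 2).sin
  exact h1.div h2 (sin_half_pos hx).ne'

lemma continuousOn_dirichletQuotDeriv (m : ℕ) :
    ContinuousOn (dirichletQuotDeriv m) (Set.Ioc 0 Real.pi) := by
  unfold dirichletQuotDeriv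
  refine ContinuousOn.div (by fun_prop) (by fun_prop) fun x hx => ?_
  exact pow_ne_zero _ (sin_half_pos hx).ne'

lemma abs_dirichletQuot_le (m : ℕ) {x : ℝ} (hx : x ∈ Set.Ioc (0 : ℝ) Real.pi) :
    |dirichletQuot m x| ≤ m := by
  have hs := sin_half_pos hx
  have h := abs_sin_nat_mul_le m (x / 2)
  rw [dirichletQuot, abs_div, abs_of_pos hs, div_le_iff₀ hs, mul_div_assoc]
  rwa [abs_of_pos hs] at h

lemma mul_abs_dirichletQuot_le (m : ℕ) {x : ℝ} (hx : x ∈ Set.Ioc (0 : ℝ) Real.pi) :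
    x * |dirichletQuot m x| ≤ Real.pi := by
  have hs := sin_half_pos hx
  have h := le_pi_mul_sin_half hx
  rw [dirichletQuot, abs_div, abs_of_pos hs, ← mul_div_assoc, div_le_iff₀ hs]
  nlinarith [Real.abs_sin_le_one (m * x / 2), hx.1]

lemma mul_abs_dirichletQuotDeriv_le (m : ℕ) {x : ℝ} (hx : x ∈ Set.Ioc (0 : ℝ) Real.pi) :
    x * |dirichletQuotDeriv m x| ≤ Real.pi * m := by
  have hs := sin_half_pos hx
  have h := le_pi_mul_sin_half hx
  have hD := abs_dirichletQuot_le m hx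
  have e : dirichletQuotDeriv m x * Real.sin (x / 2)
      = Real.cos (m * x / 2) * (m / 2) - dirichletQuot m x * (Real.cos (x / 2) * (1 / 2)) := by
    unfold dirichletQuotDeriv dirichletQuot
    field_simp
  have hm : (0 : ℝ) ≤ m := Nat.cast_nonneg m
  have b1 : |Real.cos (m * x / 2) * (m / 2)| ≤ m / 2 := by
    rw [abs_mul, abs_of_nonneg (by positivity : (0 : ℝ) ≤ m / 2)]
    exact mul_le_of_le_one_left (by positivity) (Real.abs_cos_le_one _)
  have b2 : |dirichletQuot m x * (Real.cos (x / 2) * (1 / 2))| ≤ m / 2 := by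
    rw [abs_mul, abs_mul, abs_of_pos (by norm_num : (0 : ℝ) < 1 / 2)]
    have := mul_le_mul hD (Real.abs_cos_le_one (x / 2)) (abs_nonneg _) hm
    linarith
  have b3 : |dirichletQuotDeriv m x| * Real.sin (x / 2) ≤ m := by
    have e' := congrArg abs e
    rw [abs_mul, abs_of_pos hs] at e'
    rw [e']
    exact (abs_sub _ _).trans (by linarith)
  calc x * |dirichletQuotDeriv m x|
      ≤ Real.pi * Real.sin (x / 2) * |dirichletQuotDeriv m x| := by gcongr
    _ = Real.pi * (|dirichletQuotDeriv m x| * Real.sin (x / 2)) := by ring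
    _ ≤ Real.pi * m := by gcongr

/-- The bounds `|D| ≤ m` and `x |D| ≤ π` merged into a single majorant with an elementary
primitive. -/
lemma sq_dirichletQuot_le (m : ℕ) {x : ℝ} (hx : x ∈ Set.Ioc (0 : ℝ) Real.pi) :
    dirichletQuot m x ^ 2 ≤ (1 + Real.pi ^ 2) * m ^ 2 * (1 + (m * x) ^ 2)⁻¹ := by
  rw [← div_eq_mul_inv, le_div_iff₀ (by positivity), ← sq_abs]
  have h1 := pow_le_pow_left₀ (abs_nonneg _) (abs_dirichletQuot_le m hx) 2
  have h2 := pow_le_pow_left₀ (mul_nonneg hx.1.le (abs_nonneg _)) (mul_abs_dirichletQuot_le m hx) 2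
  have h3 := mul_le_mul_of_nonneg_left h2 (sq_nonneg (m : ℝ))
  nlinarith

lemma integral_inv_one_add_mul_sq_le {m : ℕ} (hm : 1 ≤ m) :
    ∫ x in (0 : ℝ)..Real.pi, (1 + ((m : ℝ) * x) ^ 2)⁻¹ ≤ Real.pi / 2 / m := by
  have hm' : (0 : ℝ) < m := by exact_mod_cast hm
  rw [le_div_iff₀ hm', mul_comm,
    intervalIntegral.mul_integral_comp_mul_left (f := fun x : ℝ => (1 + x ^ 2)⁻¹),
    integral_inv_one_add_sq]
  simpa using (Real.arctan_lt_pi_div_two _).le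

/-- A Lipschitz function on `(0, π]` with limit `0` at `0⁺` is bounded by its Lipschitz constant
times `x`. -/
lemma abs_le_mul_of_deriv_bound {f f' : ℝ → ℝ} {c : ℝ} (hc : 0 ≤ c)
    (hderiv : ∀ x ∈ Set.Ioc (0 : ℝ) Real.pi, HasDerivAt f (f' x) x)
    (hbound : ∀ x ∈ Set.Ioc (0 : ℝ) Real.pi, |f' x| ≤ c)
    (hf : Tendsto f (nhdsWithin 0 (Set.Ioi 0)) (nhds 0)) {x : ℝ}
    (hx : x ∈ Set.Ioc (0 : ℝ) Real.pi) : |f x| ≤ c * x := by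
  have ht : Tendsto (fun y => |f x - f y|) (nhdsWithin 0 (Set.Ioi 0)) (nhds |f x - 0|) :=
    (tendsto_const_nhds.sub hf).abs
  rw [sub_zero] at ht
  refine le_of_tendsto ht ?_
  filter_upwards [Ioc_mem_nhdsGT hx.1] with y hy
  have := (convex_Ioc (0 : ℝ) Real.pi).norm_image_sub_le_of_norm_hasDerivWithin_le
    (fun z hz => (hderiv z hz).hasDerivWithinAt) hbound
    (x := y) ⟨hy.1, hy.2.trans hx.2⟩ hx
  rw [Real.norm_eq_abs, Real.norm_eq_abs, abs_of_nonneg (by linarith [hy.2] : 0 ≤ x - y)] at this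
  exact this.trans (mul_le_mul_of_nonneg_left (by linarith [hy.1]) hc)

lemma abs_deriv_mul_dirichletQuot_pow_le (m : ℕ) {c x a b : ℝ} (hc : 0 ≤ c)
    (hx : x ∈ Set.Ioc (0 : ℝ) Real.pi) (ha : |a| ≤ c * x) (hb : |b| ≤ c) :
    |b * dirichletQuot m x ^ 4 + a * (4 * dirichletQuot m x ^ 3 * dirichletQuotDeriv m x)|
      ≤ c * (1 + 4 * Real.pi) * m ^ 2 * dirichletQuot m x ^ 2 := by
  have h1 := abs_dirichletQuot_le m hx
  have h2 := mul_abs_dirichletQuotDeriv_le m hx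
  have hp := Real.pi_pos
  rw [← sq_abs (dirichletQuot m x)]
  refine (abs_add_le _ _).trans ?_
  simp only [abs_mul, abs_pow, abs_of_pos (by norm_num : (0 : ℝ) < 4)]
  have hD := abs_nonneg (dirichletQuot m x)
  generalize |dirichletQuot m x| = D at *
  generalize hE : |dirichletQuotDeriv m x| = E at *
  have hE0 : 0 ≤ E := hE ▸ abs_nonneg _
  have t1 : |b| * D ^ 4 ≤ c * (m ^ 2 * D ^ 2) := by
    have : D ^ 4 ≤ m ^ 2 * D ^ 2 := by
      calc D ^ 4 = D ^ 2 * D ^ 2 := by ring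
        _ ≤ _ := by gcongr
    exact mul_le_mul hb this (by positivity) hc
  have t2 : |a| * (4 * D ^ 3 * E) ≤ c * (4 * Real.pi * m ^ 2 * D ^ 2) := by
    calc |a| * (4 * D ^ 3 * E) ≤ c * x * (4 * D ^ 3 * E) := by gcongr
      _ = c * (4 * (D * D ^ 2) * (x * E)) := by ring
      _ ≤ c * (4 * (m * D ^ 2) * (Real.pi * m)) := by
        have := mul_nonneg hx.1.le hE0
        gcongr
      _ = _ := by ring
  linarith

/-- In the spectral-density situation of Assumption `IG(d,β)` with `d = 0.5`
(`f` continuously differentiable on `(0,π]` with `f(x) - c₀ x = O(x^{1+β})` as `x → 0⁺`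
and `|f'| ≤ c'₀` on `(0,π]`), there is a constant `C > 0` such that for all integers
`j ≥ m ≥ 1`, `|∫₀^π cos(jx) f(x) sin⁴(mx/2)/sin⁴(x/2) dx| ≤ C m³/j`. -/
theorem stmt_17 (β c₀ c₀' : ℝ) (f f' : ℝ → ℝ)
    (hβ : β ∈ Set.Ioc (0 : ℝ) 2) (hc₀ : 0 < c₀) (hc₀' : 0 < c₀')
    (hderiv : ∀ x ∈ Set.Ioc (0 : ℝ) Real.pi, HasDerivAt f (f' x) x)
    (hcont : ContinuousOn f' (Set.Ioc 0 Real.pi))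
    (hbound : ∀ x ∈ Set.Ioc (0 : ℝ) Real.pi, |f' x| ≤ c₀')
    (hfO : (fun x : ℝ => f x - c₀ * x) =O[nhdsWithin 0 (Set.Ioi 0)]
        fun x : ℝ => x ^ (1 + β)) :
    ∃ C > 0, ∀ m j : ℕ, 1 ≤ m → m ≤ j →
      |∫ x in (0 : ℝ)..Real.pi,
          Real.cos (j * x) * f x * Real.sin (m * x / 2) ^ 4 / Real.sin (x / 2) ^ 4|
        ≤ C * (m : ℝ) ^ 3 / (j : ℝ) := by
  have hf0 : Tendsto f (nhdsWithin 0 (Set.Ioi 0)) (nhds 0) := by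
    have hr : Tendsto (fun x : ℝ => x ^ (1 + β)) (nhdsWithin 0 (Set.Ioi 0)) (nhds 0) := by
      have h := (Real.continuousAt_rpow_const (0 : ℝ) (1 + β)
        (Or.inr (by linarith [hβ.1]))).tendsto
      rw [Real.zero_rpow (by linarith [hβ.1])] at h
      exact h.mono_left nhdsWithin_le_nhds
    have hl : Tendsto (fun x : ℝ => c₀ * x) (nhdsWithin 0 (Set.Ioi 0)) (nhds 0) := by
      have h : Tendsto (fun x : ℝ => c₀ * x) (nhds 0) (nhds (c₀ * 0)) :=
        (by fun_prop : Continuous fun x : ℝ => c₀ * x).tendsto 0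
      rw [mul_zero] at h
      exact h.mono_left nhdsWithin_le_nhds
    simpa using (hfO.trans_tendsto hr).add hl
  have hp := Real.pi_pos
  have hf : ∀ x ∈ Set.Ioc (0 : ℝ) Real.pi, |f x| ≤ c₀' * x := fun x hx =>
    abs_le_mul_of_deriv_bound hc₀'.le hderiv hbound hf0 hx
  refine ⟨c₀' * (1 + 4 * Real.pi) * (1 + Real.pi ^ 2) * (Real.pi / 2), by positivity,
    fun m j hm hmj => ?_⟩
  have hm' : (0 : ℝ) < m := by exact_mod_cast hm
  have hDc : ContinuousOn (dirichletQuot m) (Set.Ioc 0 Real.pi) := fun x hx =>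
    (hasDerivAt_dirichletQuot m hx).continuousAt.continuousWithinAt
  have hfc : ContinuousOn f (Set.Ioc 0 Real.pi) := fun x hx =>
    (hderiv x hx).continuousAt.continuousWithinAt
  have hDc' := continuousOn_dirichletQuotDeriv m
  have main := abs_integral_cos_mul_le (j := j) (A := c₀' * m ^ 4)
    (g := fun x => f x * dirichletQuot m x ^ 4)
    (g' := fun x => f' x * dirichletQuot m x ^ 4
      + f x * (4 * dirichletQuot m x ^ 3 * dirichletQuotDeriv m x))
    (h := fun x => c₀' * (1 + 4 * Real.pi) * (1 + Real.pi ^ 2) * m ^ 4 * (1 + (m * x) ^ 2)⁻¹)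
    (by omega) ?_ (by fun_prop) ?_ ?_ ?_
  · have e : (fun x : ℝ =>
        Real.cos (j * x) * f x * Real.sin (m * x / 2) ^ 4 / Real.sin (x / 2) ^ 4)
        = fun x => Real.cos (j * x) * (f x * dirichletQuot m x ^ 4) := by
      funext x
      rw [dirichletQuot, div_pow]
      ring
    rw [e]
    refine main.trans ?_
    gcongr
    rw [intervalIntegral.integral_const_mul]
    calc c₀' * (1 + 4 * Real.pi) * (1 + Real.pi ^ 2) * m ^ 4
          * ∫ x in (0 : ℝ)..Real.pi, (1 + ((m : ℝ) * x) ^ 2)⁻¹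
        ≤ c₀' * (1 + 4 * Real.pi) * (1 + Real.pi ^ 2) * m ^ 4 * (Real.pi / 2 / m) := by
          gcongr
          exact integral_inv_one_add_mul_sq_le hm
      _ = _ := by field_simp
  · intro x hx
    refine ((hderiv x hx).mul ((hasDerivAt_dirichletQuot m hx).pow 4)).congr_deriv ?_
    simp
  · intro x hx
    rw [abs_mul, abs_pow]
    calc |f x| * |dirichletQuot m x| ^ 4 ≤ c₀' * x * (m : ℝ) ^ 4 :=
          mul_le_mul (hf x hx)
            (pow_le_pow_left₀ (abs_nonneg _) (abs_dirichletQuot_le m hx) 4)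
            (by positivity) (mul_nonneg hc₀'.le hx.1.le)
      _ = _ := by ring
  · intro x hx
    refine (abs_deriv_mul_dirichletQuot_pow_le m hc₀'.le hx (hf x hx) (hbound x hx)).trans ?_
    calc _ ≤ c₀' * (1 + 4 * Real.pi) * m ^ 2
          * ((1 + Real.pi ^ 2) * m ^ 2 * (1 + (m * x) ^ 2)⁻¹) := by
          gcongr
          exact sq_dirichletQuot_le m hx
      _ = _ := by ring
  · refine Continuous.mul continuous_const (Continuous.inv₀ (by fun_prop) fun x => ?_)
    positivity
end
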